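/- Let n ≥ 1, 0 < α < n, and let N be a natural number with 2N > n. Then there exists a constant M > 0 such that for every x ∈ ℝⁿ, ∫_{ℝⁿ} ‖y‖^{α−n}·(1 + ‖x − y‖²)^{−N} dy ≤ M·(1 + ‖x‖²)^{(α−n)/2}. -/

import Mathlib

open MeasureTheory

/-!
Let `d` be the dimension and `⟨x⟩ = √(1 + ‖x‖²)`. The weight `f z = (1 + ‖z‖²) ^ (-s)` with
`2 * s > d` matters only through two properties: it is integrable and it is at most `⟨z⟩ ^ (-d)`.
Split the integral of `‖y‖ ^ (α - d) * f (x - y)` at `‖y‖ = r`, where `r = ⟨x⟩ / 2`.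
For `‖y‖ ≥ r` the kernel is at most `r ^ (α - d)`, and `f` is integrable.
For `‖y‖ < r`, as `⟨·⟩` is 1-Lipschitz, `⟨x - y⟩ ≥ r` and hence `f (x - y) ≤ r ^ (-d)`, while by
homogeneity the kernel has integral of order `r ^ α` over the ball of radius `r`. Both parts are
thus of order `r ^ (α - d)`.
-/

open Metric Module

section JapaneseBracket

variable {E : Type*} [NormedAddCommGroup E]

/-- The Japanese bracket `⟨x⟩ = √(1 + ‖x‖²)`, a smooth substitute for `1 + ‖x‖` in decay
estimates. -/
noncomputable def japaneseBracket (x : E) : ℝ := √(1 + ‖x‖ ^ 2)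

lemma japaneseBracket_pos (x : E) : 0 < japaneseBracket x :=
  Real.sqrt_pos.2 (by positivity)

lemma japaneseBracket_rpow (x : E) (t : ℝ) :
    japaneseBracket x ^ t = (1 + ‖x‖ ^ 2) ^ (t / 2) := by
  rw [japaneseBracket, Real.sqrt_eq_rpow, ← Real.rpow_mul (by positivity)]
  ring_nf

lemma one_add_norm_sq_rpow_neg_le_japaneseBracket_rpow {s t : ℝ} (h : t ≤ 2 * s) (z : E) :
    (1 + ‖z‖ ^ 2) ^ (-s) ≤ japaneseBracket z ^ (-t) := by
  rw [japaneseBracket_rpow]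
  exact Real.rpow_le_rpow_of_exponent_le (by linarith [sq_nonneg ‖z‖]) (by linarith)

lemma japaneseBracket_le_add_norm_sub (x y : E) :
    japaneseBracket x ≤ japaneseBracket y + ‖x - y‖ := by
  have norm_x_le : ‖x‖ ≤ ‖y‖ + ‖x - y‖ := norm_le_insert' x y
  have norm_y_le : ‖y‖ ≤ japaneseBracket y := Real.le_sqrt_of_sq_le (by linarith)
  have sq_y : japaneseBracket y ^ 2 = 1 + ‖y‖ ^ 2 := Real.sq_sqrt (by positivity)
  refine Real.sqrt_le_iff.2 ⟨by positivity [japaneseBracket_pos y], ?_⟩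
  calc 1 + ‖x‖ ^ 2 ≤ 1 + (‖y‖ + ‖x - y‖) ^ 2 := by gcongr
    _ = japaneseBracket y ^ 2 + 2 * ‖y‖ * ‖x - y‖ + ‖x - y‖ ^ 2 := by rw [sq_y]; ring
    _ ≤ japaneseBracket y ^ 2 + 2 * japaneseBracket y * ‖x - y‖ + ‖x - y‖ ^ 2 := by gcongr
    _ = (japaneseBracket y + ‖x - y‖) ^ 2 := by ring

lemma half_japaneseBracket_le_sub {x y : E} (hy : ‖y‖ < japaneseBracket x / 2) :
    japaneseBracket x / 2 ≤ japaneseBracket (x - y) := by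
  have h := japaneseBracket_le_add_norm_sub x (x - y)
  rw [sub_sub_cancel] at h
  linarith

lemma norm_rpow_mul_le_indicator_add {f : E → ℝ} {C a b : ℝ} (ha : a ≤ 0) (hb : b ≤ 0)
    (hf₀ : ∀ z, 0 ≤ f z) (hf : ∀ z, f z ≤ C * japaneseBracket z ^ b) (x y : E) :
    ‖y‖ ^ a * f (x - y) ≤
      (ball 0 (japaneseBracket x / 2)).indicator (fun y ↦ ‖y‖ ^ a) y *
          (C * (japaneseBracket x / 2) ^ b) +
        (japaneseBracket x / 2) ^ a * f (x - y) := by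
  have r_pos : 0 < japaneseBracket x / 2 := half_pos (japaneseBracket_pos x)
  set r := japaneseBracket x / 2
  have f_nonneg : 0 ≤ f (x - y) := hf₀ _
  rcases lt_or_ge ‖y‖ r with near | far
  · have C_nonneg : 0 ≤ C := nonneg_of_mul_nonneg_left ((hf₀ x).trans (hf x))
      (Real.rpow_pos_of_pos (japaneseBracket_pos x) b)
    have f_le : f (x - y) ≤ C * r ^ b := (hf _).trans <| mul_le_mul_of_nonneg_left
      (Real.rpow_le_rpow_of_nonpos r_pos (half_japaneseBracket_le_sub near) hb) C_nonneg
    rw [Set.indicator_of_mem (mem_ball_zero_iff.2 near)]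
    exact (mul_le_mul_of_nonneg_left f_le (by positivity)).trans
      (le_add_of_nonneg_right (by positivity))
  · rw [Set.indicator_of_notMem (by simpa using far), zero_mul, zero_add]
    exact mul_le_mul_of_nonneg_right (Real.rpow_le_rpow_of_nonpos r_pos far ha) f_nonneg

end JapaneseBracket

variable {E : Type*} [NormedAddCommGroup E] [NormedSpace ℝ E] [FiniteDimensional ℝ E]
  [MeasurableSpace E] [BorelSpace E] (μ : Measure E) [μ.IsAddHaarMeasure]

lemma integrable_indicator_ball_norm_rpow [Nontrivial E] {a : ℝ} (ha : -finrank ℝ E < a)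
    (r : ℝ) : Integrable ((ball 0 r).indicator fun y : E ↦ ‖y‖ ^ a) μ := by
  refine IntegrableOn.integrable_indicator ?_ measurableSet_ball
  refine integrableOn_ball_of_norm_le_rpow (C := 1) (α := -a) finrank_pos (by linarith)
    (.of_forall fun y ↦ ?_) (Measurable.aestronglyMeasurable (by fun_prop))
  rw [Real.norm_of_nonneg (by positivity), one_mul, neg_neg]

lemma setIntegral_ball_norm_rpow (a : ℝ) {r : ℝ} (hr : 0 < r) :
    ∫ y in ball (0 : E) r, ‖y‖ ^ a ∂μ =
      r ^ (a + finrank ℝ E) * ∫ y in ball (0 : E) 1, ‖y‖ ^ a ∂μ := by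
  have scaling := Measure.setIntegral_comp_smul_of_pos μ (fun y : E ↦ ‖y‖ ^ a) (ball 0 1) hr
  simp only [smul_unitBall_of_pos hr, norm_smul, Real.norm_of_nonneg hr.le,
    Real.mul_rpow hr.le (norm_nonneg _), integral_const_mul, smul_eq_mul] at scaling
  rw [Real.rpow_add hr, Real.rpow_natCast, mul_right_comm, scaling]
  field_simp

section RieszPotential

variable {μ} {f : E → ℝ} {C : ℝ}

lemma integrable_norm_rpow_mul_comp_sub [Nontrivial E] {a b : ℝ} (ha : -finrank ℝ E < a)
    (ha₀ : a ≤ 0) (hb : b ≤ 0) (hf_int : Integrable f μ) (hf₀ : ∀ z, 0 ≤ f z)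
    (hf : ∀ z, f z ≤ C * japaneseBracket z ^ b) (x : E) :
    Integrable (fun y ↦ ‖y‖ ^ a * f (x - y)) μ := by
  have translate_int := hf_int.comp_sub_left x
  refine (((integrable_indicator_ball_norm_rpow μ ha (japaneseBracket x / 2)).mul_const
    (C * (japaneseBracket x / 2) ^ b)).add
      (translate_int.const_mul ((japaneseBracket x / 2) ^ a))).mono' ?_ (.of_forall fun y ↦ ?_)
  · exact (Measurable.aestronglyMeasurable (by fun_prop)).mul translate_int.aestronglyMeasurable
  · rw [Real.norm_of_nonneg (mul_nonneg (by positivity) (hf₀ _))]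
    exact norm_rpow_mul_le_indicator_add ha₀ hb hf₀ hf x y

lemma integral_norm_rpow_mul_comp_sub_le [Nontrivial E] {a : ℝ} (ha : -finrank ℝ E < a)
    (ha₀ : a ≤ 0) (hf_int : Integrable f μ) (hf₀ : ∀ z, 0 ≤ f z)
    (hf : ∀ z, f z ≤ C * japaneseBracket z ^ (-finrank ℝ E : ℝ)) (x : E) :
    ∫ y, ‖y‖ ^ a * f (x - y) ∂μ ≤
      (C * ∫ y in ball (0 : E) 1, ‖y‖ ^ a ∂μ + ∫ z, f z ∂μ) * (japaneseBracket x / 2) ^ a := by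
  have r_pos : 0 < japaneseBracket x / 2 := half_pos (japaneseBracket_pos x)
  have hd : -(finrank ℝ E : ℝ) ≤ 0 := neg_nonpos.2 (Nat.cast_nonneg _)
  have pointwise := norm_rpow_mul_le_indicator_add ha₀ hd hf₀ hf x
  set r := japaneseBracket x / 2
  set d := (finrank ℝ E : ℝ)
  have near_int := (integrable_indicator_ball_norm_rpow μ ha r).mul_const (C * r ^ (-d))
  have far_int := (hf_int.comp_sub_left x).const_mul (r ^ a)
  calc ∫ y, ‖y‖ ^ a * f (x - y) ∂μ
      ≤ ∫ y, ((ball 0 r).indicator (fun y ↦ ‖y‖ ^ a) y * (C * r ^ (-d)) +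
          r ^ a * f (x - y)) ∂μ :=
        integral_mono (integrable_norm_rpow_mul_comp_sub ha ha₀ hd hf_int hf₀ hf x)
          (near_int.add far_int) pointwise
    _ = (r ^ (a + d) * ∫ y in ball (0 : E) 1, ‖y‖ ^ a ∂μ) * (C * r ^ (-d)) +
          r ^ a * ∫ z, f z ∂μ := by
        rw [integral_add near_int far_int, integral_mul_const, integral_const_mul,
          integral_indicator measurableSet_ball, setIntegral_ball_norm_rpow μ a r_pos,
          integral_sub_left_eq_self f μ x]
    _ = (C * ∫ y in ball (0 : E) 1, ‖y‖ ^ a ∂μ + ∫ z, f z ∂μ) * r ^ a := by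
        have cancel : r ^ (a + d) * r ^ (-d) = r ^ a := by
          rw [← Real.rpow_add r_pos, add_neg_cancel_right]
        rw [← cancel]
        ring

end RieszPotential

theorem riesz_kernel_global_estimate_general {α s : ℝ} (hα₀ : 0 < α) (hα : α ≤ finrank ℝ E)
    (hs : finrank ℝ E < 2 * s) :
    ∃ M > 0, ∀ x : E,
      Integrable (fun y ↦ ‖y‖ ^ (α - finrank ℝ E) * (1 + ‖x - y‖ ^ 2) ^ (-s)) μ ∧
        ∫ y, ‖y‖ ^ (α - finrank ℝ E) * (1 + ‖x - y‖ ^ 2) ^ (-s) ∂μ ≤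
          M * (1 + ‖x‖ ^ 2) ^ ((α - finrank ℝ E) / 2) := by
  have : Nontrivial E := finrank_pos_iff.1 (by exact_mod_cast hα₀.trans_le hα)
  set d := (finrank ℝ E : ℝ)
  have ha : -d < α - d := by linarith
  have ha₀ : α - d ≤ 0 := sub_nonpos.2 hα
  have weight_int : Integrable (fun z : E ↦ (1 + ‖z‖ ^ 2) ^ (-s)) μ := by
    simpa [neg_div] using integrable_rpow_neg_one_add_norm_sq (μ := μ) hs
  have weight_nonneg (z : E) : 0 ≤ (1 + ‖z‖ ^ 2) ^ (-s) := by positivity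
  have weight_le (z : E) : (1 + ‖z‖ ^ 2) ^ (-s) ≤ 1 * japaneseBracket z ^ (-d) := by
    simpa using one_add_norm_sq_rpow_neg_le_japaneseBracket_rpow hs.le z
  set K := 1 * ∫ y in ball (0 : E) 1, ‖y‖ ^ (α - d) ∂μ + ∫ z : E, (1 + ‖z‖ ^ 2) ^ (-s) ∂μ
  have K_nonneg : 0 ≤ K := by positivity
  refine ⟨K / 2 ^ (α - d) + 1, by positivity [K_nonneg], fun x ↦
    ⟨integrable_norm_rpow_mul_comp_sub ha ha₀ (by simp [d]) weight_int weight_nonneg weight_le x,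
      ?_⟩⟩
  calc ∫ y, ‖y‖ ^ (α - d) * (1 + ‖x - y‖ ^ 2) ^ (-s) ∂μ
      ≤ K * (japaneseBracket x / 2) ^ (α - d) :=
        integral_norm_rpow_mul_comp_sub_le ha ha₀ weight_int weight_nonneg weight_le x
    _ = K / 2 ^ (α - d) * (1 + ‖x‖ ^ 2) ^ ((α - d) / 2) := by
        rw [Real.div_rpow (japaneseBracket_pos x).le zero_le_two, japaneseBracket_rpow]
        ring
    _ ≤ (K / 2 ^ (α - d) + 1) * (1 + ‖x‖ ^ 2) ^ ((α - d) / 2) := by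
        gcongr
        exact le_add_of_nonneg_right zero_le_one

/-- For `0 < α < n` and `2N > n`, there is `M > 0` such that for every `x ∈ ℝⁿ`,
`∫ ‖y‖^{α-n}(1 + ‖x-y‖²)^{-N} dy ≤ M (1 + ‖x‖²)^{(α-n)/2}`. -/
theorem riesz_kernel_global_estimate (n : ℕ) (hn : 1 ≤ n) (α : ℝ)
    (hα0 : 0 < α) (hαn : α < n) (N : ℕ) (hN : n < 2 * N) :
    ∃ M > 0, ∀ x : EuclideanSpace ℝ (Fin n),
      (∫ y : EuclideanSpace ℝ (Fin n),
          ‖y‖ ^ (α - n) * (1 + ‖x - y‖ ^ 2) ^ (-(N : ℝ))) ≤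
        M * (1 + ‖x‖ ^ 2) ^ ((α - n) / 2) := by
  obtain ⟨M, hM, h⟩ := riesz_kernel_global_estimate_general
    (volume : Measure (EuclideanSpace ℝ (Fin n))) (s := N) hα0 (by simpa using hαn.le)
    (by simpa using mod_cast hN)
  exact ⟨M, hM, fun x ↦ by simpa using (h x).2⟩
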